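/- Let M ∈ ℝ^{m×n} be entrywise nonnegative admitting a separable factorization M = UV with U ∈ ℝ^{m×r}, V ∈ ℝ^{r×n} entrywise nonnegative, and suppose conv(θ(M)) has exactly r extreme points, each equal to θ(M_{:i}) for exactly one column index i (the r vertices of θ(M) are non-repeated). Then the preprocessed matrix P(M) has exactly r nonzero columns, and letting S be the m×r submatrix formed by these nonzero columns, there exists an entrywise nonnegative matrix R with M = SR (equivalently conv(θ(M)) ⊆ conv(θ(S))). -/

import Mathlib

open Matrix BigOperators

/-- The column `j` of `M` normalized to unit ℓ₁-norm. -/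
noncomputable def normCol {m n : ℕ} (M : Matrix (Fin m) (Fin n) ℝ) (j : Fin n) : Fin m → ℝ :=
  (∑ i, |M i j|)⁻¹ • fun i => M i j

/-- Column `j` of `M` is nonzero. -/
def colNZ {m n : ℕ} (M : Matrix (Fin m) (Fin n) ℝ) (j : Fin n) : Prop :=
  (fun i => M i j) ≠ 0

/-- `θ(M)`: the set of ℓ₁-normalized nonzero columns of `M`. -/
noncomputable def thetaCols {m n : ℕ} (M : Matrix (Fin m) (Fin n) ℝ) : Set (Fin m → ℝ) :=
  {x | ∃ j, colNZ M j ∧ x = normCol M j}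

/-- The nonnegative rank of `M`. -/
noncomputable def nnRank {m n : ℕ} (M : Matrix (Fin m) (Fin n) ℝ) : ℕ :=
  sInf {r : ℕ | ∃ U : Matrix (Fin m) (Fin r) ℝ, ∃ V : Matrix (Fin r) (Fin n) ℝ,
    (∀ i j, 0 ≤ U i j) ∧ (∀ i j, 0 ≤ V i j) ∧ M = U * V}

/-- The squared Frobenius norm. -/
noncomputable def frobSq {m n : ℕ} (A : Matrix (Fin m) (Fin n) ℝ) : ℝ :=
  ∑ i, ∑ j, (A i j) ^ 2

/-- Feasibility for problem (tigrel): `B ≥ 0`, zero diagonal, `MB ≤ M` entrywise. -/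
def TigrelFeasible {m n : ℕ} (M : Matrix (Fin m) (Fin n) ℝ)
    (B : Matrix (Fin n) (Fin n) ℝ) : Prop :=
  (∀ i j, 0 ≤ B i j) ∧ (∀ i, B i i = 0) ∧ ∀ i j, (M * B) i j ≤ M i j

/-- Optimality for problem (tigrel): feasible and minimizes `‖M - MB‖_F²`. -/
def TigrelOpt {m n : ℕ} (M : Matrix (Fin m) (Fin n) ℝ)
    (B : Matrix (Fin n) (Fin n) ℝ) : Prop :=
  TigrelFeasible M B ∧
    ∀ B', TigrelFeasible M B' → frobSq (M - M * B) ≤ frobSq (M - M * B')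

/-- A monomial matrix: permutation of a diagonal matrix with positive diagonal. -/
def IsMonomial {k : ℕ} (P : Matrix (Fin k) (Fin k) ℝ) : Prop :=
  ∃ (σ : Equiv.Perm (Fin k)) (d : Fin k → ℝ), (∀ i, 0 < d i) ∧
    ∀ i j, P i j = if i = σ j then d j else 0

/-- Every extreme point of `conv(θ(M))` equals `θ(M_{:j})` for exactly one column `j`. -/
def NonRepeatedVertices {m n : ℕ} (M : Matrix (Fin m) (Fin n) ℝ) : Prop :=
  ∀ x ∈ Set.extremePoints ℝ (convexHull ℝ (thetaCols M)),
    ∃! j : Fin n, colNZ M j ∧ x = normCol M j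

/-- Uniqueness of size-`r` exact NMF up to permutation and scaling. -/
def UniqueNMF {m n : ℕ} (r : ℕ) (M : Matrix (Fin m) (Fin n) ℝ) : Prop :=
  ∀ (U₁ U₂ : Matrix (Fin m) (Fin r) ℝ) (V₁ V₂ : Matrix (Fin r) (Fin n) ℝ),
    (∀ i j, 0 ≤ U₁ i j) → (∀ i j, 0 ≤ V₁ i j) →
    (∀ i j, 0 ≤ U₂ i j) → (∀ i j, 0 ≤ V₂ i j) →
    M = U₁ * V₁ → M = U₂ * V₂ →
    ∃ P : Matrix (Fin r) (Fin r) ℝ, IsMonomial P ∧ U₂ = U₁ * P ∧ V₂ = P⁻¹ * V₁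

/-- Separability of a factorization, expressed as a property of the right factor `V`. -/
def SeparableFactor {r n : ℕ} (V : Matrix (Fin r) (Fin n) ℝ) : Prop :=
  ∀ i : Fin r, ∃ j : Fin n, V i j ≠ 0 ∧ ∀ i' : Fin r, i' ≠ i → V i' j = 0

/-- The Frobenius norm. -/
noncomputable def frobNorm {m n : ℕ} (A : Matrix (Fin m) (Fin n) ℝ) : ℝ :=
  Real.sqrt (∑ i, ∑ j, (A i j) ^ 2)

/-- The Euclidean (ℓ₂) norm of a vector. -/
noncomputable def vecNorm2 {n : ℕ} (x : Fin n → ℝ) : ℝ :=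
  Real.sqrt (∑ i, (x i) ^ 2)

/-- The spectral (operator 2-) norm of a matrix. -/
noncomputable def specNorm {m n : ℕ} (A : Matrix (Fin m) (Fin n) ℝ) : ℝ :=
  sSup {c : ℝ | ∃ x : Fin n → ℝ, vecNorm2 x ≤ 1 ∧ c = vecNorm2 (A.mulVec x)}

/-!
Write `θ_j` for the normalized column `j` of `M`. A column of `P(M)` vanishes if and only if the
corresponding column of `M` lies in the cone generated by the other columns of `M`: if it does, then
replacing that column of `B` by the coefficients of the combination keeps `B` feasible and makes the
column of the residual zero. By Krein-Milman the columns at the vertices of `conv(θ(M))` generate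
the whole cone, so all other columns are killed; conversely, normalizing a conic combination of
nonnegative columns turns it into a convex one, so a non-repeated vertex cannot be a combination of
the other columns. Hence the columns of `S` sit at the `r` vertices.

To recover `M`, let `A` be the submatrix of `M` formed by the vertex columns and write `M = AW` with
`W ≥ 0`. Then `S = A(I - C)` for a nonnegative matrix `C`. The partial sums of the Neumann series of
`C` satisfy `S ∑ Cⁱ = A - A Cᴺ ≤ A`, and since `S ≥ 0` has no zero column they are bounded, so that
`A = S ∑ Cⁱ` and `M = S (∑ Cⁱ) W`.
-/

section Cones

variable {R E : Type*} [Field R] [LinearOrder R] [IsStrictOrderedRing R] [AddCommGroup E]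
  [Module R E]

theorem hull_convexHull (s : Set E) :
    PointedCone.hull R (convexHull R s) = PointedCone.hull R s :=
  le_antisymm
    (Submodule.span_le.2 (convexHull_min PointedCone.subset_hull (PointedCone.convex _)))
    (Submodule.span_mono (subset_convexHull R s))

theorem mem_convexHull_of_mem_hull {s : Set E} {x : E} (φ : E →ₗ[R] R) (hs : ∀ y ∈ s, φ y = 1)
    (hx : x ∈ PointedCone.hull R s) (hφx : φ x = 1) : x ∈ convexHull R s := by
  obtain ⟨c, hcs, hc, rfl⟩ := PointedCone.mem_hull_set.1 hx
  have hsum : ∑ y ∈ c.support, c y = 1 := by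
    rw [← hφx, Finsupp.sum, map_sum]
    refine Finset.sum_congr rfl fun y hy => ?_
    rw [map_smul, hs y (hcs hy), smul_eq_mul, mul_one]
  exact (convex_convexHull R s).sum_mem (fun y _ => hc y) hsum
    fun y hy => subset_convexHull R s (hcs hy)

end Cones

theorem convexHull_extremePoints_convexHull {E : Type*} [AddCommGroup E] [Module ℝ E]
    [TopologicalSpace E] [T2Space E] [IsTopologicalAddGroup E] [ContinuousSMul ℝ E]
    [LocallyConvexSpace ℝ E] {s : Set E} (hs : s.Finite) :
    convexHull ℝ ((convexHull ℝ s).extremePoints ℝ) = convexHull ℝ s := by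
  have hfin : ((convexHull ℝ s).extremePoints ℝ).Finite :=
    hs.subset extremePoints_convexHull_subset
  rw [← (hfin.isClosed_convexHull ℝ).closure_eq]
  exact closure_convexHull_extremePoints (hs.isCompact_convexHull ℝ) (convex_convexHull ℝ s)

section NonnegMatrix

variable {ι κ ν R : Type*} [Fintype κ]

theorem matrix_mul_apply_nonneg [Semiring R] [PartialOrder R] [IsOrderedRing R]
    {A : Matrix ι κ R} {B : Matrix κ ν R} (hA : ∀ i k, 0 ≤ A i k) (hB : ∀ k j, 0 ≤ B k j) (i : ι)
    (j : ν) : 0 ≤ (A * B) i j := by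
  rw [Matrix.mul_apply]
  exact Finset.sum_nonneg fun k _ => mul_nonneg (hA i k) (hB k j)

theorem mem_hull_col_image_iff [CommSemiring R] [PartialOrder R] [IsOrderedRing R]
    {A : Matrix ι κ R} {s : Set κ} {x : ι → R} :
    x ∈ PointedCone.hull R (A.col '' s) ↔
      ∃ w : κ → R, (∀ k, 0 ≤ w k) ∧ (∀ k ∉ s, w k = 0) ∧ A *ᵥ w = x := by
  have mulVec_eq (w : κ → R) : A *ᵥ w = ∑ k, w k • A.col k := by
    simp only [Matrix.mulVec_eq_sum, op_smul_eq_smul, Matrix.col_def]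
  constructor
  · intro hx
    obtain ⟨c, hcs, rfl⟩ := (Finsupp.mem_span_image_iff_linearCombination _).1 hx
    refine ⟨fun k => c k, fun k => (c k).2, fun k hk => ?_, ?_⟩
    · exact congrArg Subtype.val (Finsupp.notMem_support_iff.1 fun hkc => hk (hcs hkc))
    · rw [mulVec_eq, Finsupp.linearCombination_apply, Finsupp.sum_fintype _ _ (by simp)]
      rfl
  · rintro ⟨w, hw, hws, rfl⟩
    rw [mulVec_eq]
    refine sum_mem fun k _ => ?_
    by_cases hk : k ∈ s
    · exact PointedCone.smul_mem _ (hw k) (PointedCone.subset_hull ⟨k, hk, rfl⟩)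
    · rw [hws k hk, zero_smul]
      exact zero_mem _

theorem exists_nonneg_mul_eq_of_col_mem_hull [CommSemiring R] [PartialOrder R] [IsOrderedRing R]
    {A : Matrix ι κ R} {M : Matrix ι ν R}
    (h : ∀ j, M.col j ∈ PointedCone.hull R (Set.range A.col)) :
    ∃ W : Matrix κ ν R, (∀ k j, 0 ≤ W k j) ∧ A * W = M := by
  simp only [← Set.image_univ, mem_hull_col_image_iff] at h
  choose w hw _ hMw using h
  exact ⟨Matrix.of fun k j => w j k, fun k j => hw j k, Matrix.ext fun i j => congrFun (hMw j) i⟩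

end NonnegMatrix

section Neumann

variable {ι κ : Type*} [Fintype κ] [DecidableEq κ] {A S : Matrix ι κ ℝ} {C : Matrix κ κ ℝ}

theorem summable_pow_of_mul_one_sub_nonneg (hA : ∀ i k, 0 ≤ A i k) (hC : ∀ k l, 0 ≤ C k l)
    (hAC : A * (1 - C) = S) (hS : ∀ i k, 0 ≤ S i k) (hne : ∀ k, S.col k ≠ 0) :
    Summable (C ^ ·) := by
  have hCpow (N : ℕ) : ∀ k l, 0 ≤ (C ^ N) k l := Matrix.pow_apply_nonneg hC N
  have hpartial (N : ℕ) (k l : κ) : 0 ≤ (∑ i ∈ Finset.range N, C ^ i) k l := by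
    rw [Matrix.sum_apply]
    exact Finset.sum_nonneg fun i _ => hCpow i k l
  have htelescope (N : ℕ) : S * ∑ i ∈ Finset.range N, C ^ i = A - A * C ^ N := by
    rw [← hAC, Matrix.mul_assoc, mul_neg_geom_sum, Matrix.mul_sub, Matrix.mul_one]
  refine Pi.summable.2 fun k => Pi.summable.2 fun l => ?_
  obtain ⟨p, hp⟩ := Function.ne_iff.1 (hne k)
  have hSpos : 0 < S p k := (hS p k).lt_of_ne' hp
  refine summable_of_sum_range_le (c := A p l / S p k) (fun N => hCpow N k l)
    fun N => (le_div_iff₀' hSpos).2 ?_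
  calc S p k * ∑ i ∈ Finset.range N, (C ^ i) k l
      = S p k * (∑ i ∈ Finset.range N, C ^ i) k l := by rw [Matrix.sum_apply]
    _ ≤ (S * ∑ i ∈ Finset.range N, C ^ i) p l := by
      rw [Matrix.mul_apply]
      exact Finset.single_le_sum (f := fun k => S p k * (∑ i ∈ Finset.range N, C ^ i) k l)
        (fun k _ => mul_nonneg (hS p k) (hpartial N k l)) (Finset.mem_univ k)
    _ ≤ A p l := by
      rw [htelescope, Matrix.sub_apply]
      exact sub_le_self _ (matrix_mul_apply_nonneg hA (hCpow N) p l)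

theorem exists_nonneg_mul_eq_of_mul_one_sub_nonneg (hA : ∀ i k, 0 ≤ A i k)
    (hC : ∀ k l, 0 ≤ C k l) (hAC : A * (1 - C) = S) (hS : ∀ i k, 0 ≤ S i k)
    (hne : ∀ k, S.col k ≠ 0) : ∃ T : Matrix κ κ ℝ, (∀ k l, 0 ≤ T k l) ∧ S * T = A := by
  have hsum : Summable (C ^ ·) := summable_pow_of_mul_one_sub_nonneg hA hC hAC hS hne
  refine ⟨∑' N, C ^ N, fun k l => ?_, ?_⟩
  · exact (Pi.hasSum.1 (Pi.hasSum.1 hsum.hasSum k) l).nonneg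
      fun N => Matrix.pow_apply_nonneg hC N k l
  · rw [← hAC, Matrix.mul_assoc, hsum.one_sub_mul_tsum_pow, Matrix.mul_one]

end Neumann

section NormalizedColumns

variable {m n : ℕ} {M : Matrix (Fin m) (Fin n) ℝ} {j : Fin n}

theorem colNZ.sum_abs_pos (hj : colNZ M j) : 0 < ∑ i, |M i j| := by
  obtain ⟨p, hp⟩ := Function.ne_iff.1 hj
  exact Finset.sum_pos' (fun i _ => abs_nonneg _) ⟨p, Finset.mem_univ _, abs_pos.2 hp⟩

theorem colNZ.sum_abs_smul_normCol (hj : colNZ M j) : (∑ i, |M i j|) • normCol M j = M.col j :=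
  smul_inv_smul₀ hj.sum_abs_pos.ne' _

theorem colNZ.sum_normCol (hM : ∀ i, 0 ≤ M i j) (hj : colNZ M j) : ∑ i, normCol M j i = 1 := by
  have hsum : ∑ i, |M i j| = ∑ i, M i j := Finset.sum_congr rfl fun i _ => abs_of_nonneg (hM i)
  simp only [normCol, Pi.smul_apply, smul_eq_mul, ← Finset.mul_sum, ← hsum]
  exact inv_mul_cancel₀ hj.sum_abs_pos.ne'

theorem thetaCols_eq_image (M : Matrix (Fin m) (Fin n) ℝ) :
    thetaCols M = normCol M '' {j | colNZ M j} :=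
  Set.ext fun _ => exists_congr fun _ => and_congr_right fun _ => eq_comm

theorem hull_normCol_image (M : Matrix (Fin m) (Fin n) ℝ) (s : Set (Fin n)) :
    PointedCone.hull ℝ (normCol M '' {j ∈ s | colNZ M j}) = PointedCone.hull ℝ (M.col '' s) := by
  apply le_antisymm <;> refine Submodule.span_le.2 ?_
  · rintro _ ⟨j, ⟨hjs, -⟩, rfl⟩
    exact PointedCone.smul_mem _ (inv_nonneg.2 (Finset.sum_nonneg fun i _ => abs_nonneg _))
      (PointedCone.subset_hull ⟨j, hjs, rfl⟩)
  · rintro _ ⟨j, hjs, rfl⟩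
    by_cases hj : colNZ M j
    · rw [← hj.sum_abs_smul_normCol]
      exact PointedCone.smul_mem _ hj.sum_abs_pos.le (PointedCone.subset_hull ⟨j, ⟨hjs, hj⟩, rfl⟩)
    · rw [show M.col j = 0 from not_not.1 hj]
      exact zero_mem _

end NormalizedColumns

section VertexColumns

variable {m n : ℕ} {M : Matrix (Fin m) (Fin n) ℝ} {j : Fin n}

/-- The normalized column `j` of `M` is a vertex of `conv(θ(M))`; these are the columns that the
preprocessing keeps. A zero column has `normCol M j = 0`, which is not even a member of `θ(M)`. -/
def IsVertexCol (M : Matrix (Fin m) (Fin n) ℝ) (j : Fin n) : Prop :=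
  normCol M j ∈ (convexHull ℝ (thetaCols M)).extremePoints ℝ

protected theorem IsVertexCol.colNZ (hj : IsVertexCol M j) : colNZ M j := by
  obtain ⟨l, hl, hjl⟩ := extremePoints_convexHull_subset hj
  intro hj0
  have hl0 : normCol M l = 0 := by rw [← hjl, normCol, hj0, smul_zero]
  exact hl (hl.sum_abs_smul_normCol.symm.trans (by rw [hl0, smul_zero]))

theorem normCol_image_isVertexCol (M : Matrix (Fin m) (Fin n) ℝ) :
    normCol M '' {j | IsVertexCol M j} = (convexHull ℝ (thetaCols M)).extremePoints ℝ := by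
  refine Set.Subset.antisymm (Set.image_subset_iff.2 fun _ hj => hj) fun x hx => ?_
  obtain ⟨j, -, rfl⟩ := extremePoints_convexHull_subset hx
  exact ⟨j, hx, rfl⟩

theorem hull_col_image_isVertexCol (M : Matrix (Fin m) (Fin n) ℝ) :
    PointedCone.hull ℝ (M.col '' {j | IsVertexCol M j}) = PointedCone.hull ℝ (Set.range M.col) := by
  have hfin : (thetaCols M).Finite := by
    rw [thetaCols_eq_image]
    exact Set.toFinite _
  have hsep : {j ∈ {j | IsVertexCol M j} | colNZ M j} = {j | IsVertexCol M j} :=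
    Set.sep_eq_self_iff_mem_true.2 fun _ hj => hj.colNZ
  rw [← hull_normCol_image, hsep, normCol_image_isVertexCol, ← hull_convexHull,
    convexHull_extremePoints_convexHull hfin, hull_convexHull, thetaCols_eq_image,
    ← Set.image_univ, ← hull_normCol_image, Set.sep_univ]

theorem NonRepeatedVertices.injOn_normCol (hvert : NonRepeatedVertices M) :
    Set.InjOn (normCol M) {j | IsVertexCol M j} :=
  fun _ hj _ hl hjl => (hvert _ hj).unique ⟨hj.colNZ, rfl⟩ ⟨hl.colNZ, hjl⟩

theorem NonRepeatedVertices.ncard_isVertexCol (hvert : NonRepeatedVertices M) :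
    {j | IsVertexCol M j}.ncard = ((convexHull ℝ (thetaCols M)).extremePoints ℝ).ncard := by
  rw [← normCol_image_isVertexCol, hvert.injOn_normCol.ncard_image]

theorem IsVertexCol.col_notMem_hull (hM : ∀ i j, 0 ≤ M i j) (hvert : NonRepeatedVertices M)
    (hj : IsVertexCol M j) : M.col j ∉ PointedCone.hull ℝ (M.col '' {j}ᶜ) := by
  intro hmem
  set s : Set (Fin m → ℝ) := normCol M '' {l ∈ ({j}ᶜ : Set (Fin n)) | colNZ M l} with hs
  have hsub : s ⊆ thetaCols M := by
    rw [thetaCols_eq_image]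
    exact Set.image_mono fun l hl => hl.2
  have hcone : normCol M j ∈ PointedCone.hull ℝ s := by
    rw [hs, hull_normCol_image]
    exact PointedCone.smul_mem _ (inv_nonneg.2 hj.colNZ.sum_abs_pos.le) hmem
  have hconv : normCol M j ∈ convexHull ℝ s := by
    refine mem_convexHull_of_mem_hull (∑ i, LinearMap.proj i) ?_ hcone ?_
    · rintro _ ⟨l, ⟨-, hl⟩, rfl⟩
      simpa using hl.sum_normCol fun i => hM i l
    · simpa using hj.colNZ.sum_normCol fun i => hM i j
  obtain ⟨l, ⟨hlj, hl⟩, hlx⟩ := extremePoints_convexHull_subset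
    (inter_extremePoints_subset_extremePoints_of_subset (convexHull_mono hsub) ⟨hconv, hj⟩)
  exact hlj ((hvert _ hj).unique ⟨hl, hlx.symm⟩ ⟨hj.colNZ, rfl⟩)

theorem isVertexCol_iff_col_notMem_hull (hM : ∀ i j, 0 ≤ M i j) (hvert : NonRepeatedVertices M) :
    IsVertexCol M j ↔ M.col j ∉ PointedCone.hull ℝ (M.col '' {j}ᶜ) := by
  refine ⟨IsVertexCol.col_notMem_hull hM hvert, not_imp_comm.1 fun hj => ?_⟩
  have hmem : M.col j ∈ PointedCone.hull ℝ (M.col '' {l | IsVertexCol M l}) := by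
    rw [hull_col_image_isVertexCol]
    exact PointedCone.subset_hull ⟨j, rfl⟩
  have hsub : {l | IsVertexCol M l} ⊆ {j}ᶜ := by
    rintro l hl rfl
    exact hj hl
  exact Submodule.span_mono (Set.image_mono hsub) hmem

end VertexColumns

section Tigrel

variable {m n : ℕ} {M : Matrix (Fin m) (Fin n) ℝ} {B : Matrix (Fin n) (Fin n) ℝ} {j : Fin n}
  {w : Fin n → ℝ}

theorem frobSq_updateCol_zero_lt {A : Matrix (Fin m) (Fin n) ℝ} (hj : A.col j ≠ 0) :
    frobSq (A.updateCol j 0) < frobSq A := by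
  have hle (i : Fin m) (k : Fin n) : (A.updateCol j 0 i k) ^ 2 ≤ (A i k) ^ 2 := by
    rw [Matrix.updateCol_apply]
    split_ifs
    · simpa using sq_nonneg (A i k)
    · rfl
  obtain ⟨p, hp⟩ := Function.ne_iff.1 hj
  refine Finset.sum_lt_sum (fun i _ => Finset.sum_le_sum fun k _ => hle i k)
    ⟨p, Finset.mem_univ p, Finset.sum_lt_sum (fun k _ => hle p k) ⟨j, Finset.mem_univ j, ?_⟩⟩
  simpa using sq_pos_of_ne_zero hp

theorem TigrelFeasible.updateCol (hB : TigrelFeasible M B) (hw : ∀ l, 0 ≤ w l) (hwj : w j = 0)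
    (hMw : ∀ i, (M *ᵥ w) i ≤ M i j) : TigrelFeasible M (B.updateCol j w) := by
  refine ⟨fun i k => ?_, fun i => ?_, fun i k => ?_⟩
  · rw [Matrix.updateCol_apply]
    split_ifs
    exacts [hw i, hB.1 i k]
  · rw [Matrix.updateCol_apply]
    split_ifs with hij
    exacts [hij ▸ hwj, hB.2.1 i]
  · rw [Matrix.mul_updateCol, Matrix.updateCol_apply]
    split_ifs with hkj
    exacts [hkj ▸ hMw i, hB.2.2 i k]

theorem TigrelFeasible.col_mem_hull (hB : TigrelFeasible M B) (hj : ¬colNZ (M * (1 - B)) j) :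
    M.col j ∈ PointedCone.hull ℝ (M.col '' {j}ᶜ) := by
  refine mem_hull_col_image_iff.2 ⟨B.col j, fun l => hB.1 l j, fun l hl => ?_, ?_⟩
  · rw [not_not.1 hl]
    exact hB.2.1 j
  · ext i
    rw [Matrix.mul_sub, Matrix.mul_one] at hj
    have hres : M i j - (M * B) i j = 0 := congrFun (not_not.1 hj) i
    exact (sub_eq_zero.1 hres).symm

theorem TigrelOpt.not_colNZ_of_col_mem_hull (hB : TigrelOpt M B)
    (hj : M.col j ∈ PointedCone.hull ℝ (M.col '' {j}ᶜ)) : ¬colNZ (M * (1 - B)) j := by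
  obtain ⟨w, hw, hwj, hMw⟩ := mem_hull_col_image_iff.1 hj
  have hfeas : TigrelFeasible M (B.updateCol j w) :=
    hB.1.updateCol hw (hwj j (by simp)) fun i => (congrFun hMw i).le
  have hres : M - M * B.updateCol j w = (M - M * B).updateCol j 0 := by
    rw [Matrix.mul_updateCol, hMw]
    ext i k
    obtain rfl | hkj := eq_or_ne k j <;> simp [*]
  intro hne
  rw [Matrix.mul_sub, Matrix.mul_one] at hne
  refine (frobSq_updateCol_zero_lt (A := M - M * B) hne).not_ge ?_
  rw [← hres]
  exact hB.2 _ hfeas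

theorem TigrelOpt.colNZ_iff_isVertexCol (hM : ∀ i j, 0 ≤ M i j) (hvert : NonRepeatedVertices M)
    (hB : TigrelOpt M B) : colNZ (M * (1 - B)) j ↔ IsVertexCol M j := by
  rw [isVertexCol_iff_col_notMem_hull hM hvert]
  exact ⟨fun hne hmem => hB.not_colNZ_of_col_mem_hull hmem hne, not_imp_comm.1 hB.1.col_mem_hull⟩

theorem TigrelFeasible.exists_nonneg_eq_submatrix_mul {κ : Type*} [Fintype κ]
    (hM : ∀ i j, 0 ≤ M i j) (hB : TigrelFeasible M B) {f : κ → Fin n}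
    (hf : ∀ k, colNZ (M * (1 - B)) (f k))
    (hcone : PointedCone.hull ℝ (M.col '' Set.range f) = PointedCone.hull ℝ (Set.range M.col)) :
    ∃ R : Matrix κ (Fin n) ℝ, (∀ k j, 0 ≤ R k j) ∧ M = (M * (1 - B)).submatrix id f * R := by
  classical
  set A : Matrix (Fin m) κ ℝ := M.submatrix id f
  obtain ⟨W, hW, hAW⟩ : ∃ W : Matrix κ (Fin n) ℝ, (∀ k j, 0 ≤ W k j) ∧ A * W = M := by
    refine exists_nonneg_mul_eq_of_col_mem_hull fun j => ?_
    have hrange : Set.range A.col = M.col '' Set.range f := Set.range_comp M.col f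
    rw [hrange, hcone]
    exact PointedCone.subset_hull ⟨j, rfl⟩
  set C : Matrix κ κ ℝ := W * B.submatrix id f
  have hAC : A * (1 - C) = (M - M * B).submatrix id f := by
    rw [Matrix.mul_sub, Matrix.mul_one, ← Matrix.mul_assoc, hAW]
    rfl
  rw [Matrix.mul_sub, Matrix.mul_one] at hf ⊢
  obtain ⟨T, hT, hST⟩ := exists_nonneg_mul_eq_of_mul_one_sub_nonneg (A := A)
    (fun i k => hM i (f k)) (matrix_mul_apply_nonneg hW fun l k => hB.1 l (f k))
    hAC (fun i k => sub_nonneg.2 (hB.2.2 i (f k))) hf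
  refine ⟨T * W, matrix_mul_apply_nonneg hT hW, ?_⟩
  rw [← Matrix.mul_assoc, hST, hAW]

end Tigrel

/-- if `M` admits a separable factorization of size `r` and `conv(θ(M))`
has exactly `r` non-repeated vertices, then `P(M)` has exactly `r` nonzero columns
and the submatrix `S` they form satisfies `M = SR` for some `R ≥ 0`. -/
theorem stmt15 {m n r : ℕ} (M : Matrix (Fin m) (Fin n) ℝ) (hM : ∀ i j, 0 ≤ M i j)
    (U : Matrix (Fin m) (Fin r) ℝ) (V : Matrix (Fin r) (Fin n) ℝ)
    (hU : ∀ i j, 0 ≤ U i j) (hV : ∀ i j, 0 ≤ V i j)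
    (hfact : M = U * V) (hsep : SeparableFactor V)
    (hcard : (Set.extremePoints ℝ (convexHull ℝ (thetaCols M))).ncard = r)
    (hvert : NonRepeatedVertices M)
    (B : Matrix (Fin n) (Fin n) ℝ) (hB : TigrelOpt M B) :
    ∃ f : Fin r → Fin n, Function.Injective f ∧
      (∀ k, colNZ (M * (1 - B)) (f k)) ∧
      (∀ j, colNZ (M * (1 - B)) j → ∃ k, f k = j) ∧
      ∃ R : Matrix (Fin r) (Fin n) ℝ, (∀ i j, 0 ≤ R i j) ∧
        M = (Matrix.of fun p k => (M * (1 - B) : Matrix (Fin m) (Fin n) ℝ) p (f k)) * R := by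
  have e : Fin r ≃ {j | IsVertexCol M j} :=
    (Finite.equivFinOfCardEq (hvert.ncard_isVertexCol.trans hcard)).symm
  have hNZ (j : Fin n) : colNZ (M * (1 - B)) j ↔ IsVertexCol M j :=
    hB.colNZ_iff_isVertexCol hM hvert
  have hf (k : Fin r) : colNZ (M * (1 - B)) (e k) := (hNZ _).2 (e k).2
  have hrange : Set.range (fun k => (e k : Fin n)) = {j | IsVertexCol M j} :=
    (EquivLike.range_comp Subtype.val e).trans Subtype.range_coe
  refine ⟨fun k => e k, Subtype.val_injective.comp e.injective, hf,
    fun j hj => hrange.ge ((hNZ j).1 hj), hB.1.exists_nonneg_eq_submatrix_mul hM hf ?_⟩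
  rw [hrange, hull_col_image_isVertexCol]
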